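/- Let q be an odd prime power, r > 3, and let B be the hypersurface of PG(r,q²) defined below (with the stated conditions on α and β). Then B spans PG(r,q²) (so the projective code C(B) has dimension r+1) and C(B) is a minimal code; its length is N = q^{2r−1}+q^{r−1}+(q^{2(r−1)}−q²)/(q²−1)+1 if r is odd and N = q^{2r−1}+(q^{2(r−1)}−q²)/(q²−1)+1 if r is even. -/

import Mathlib

/-- The affine equation
`x_r^q − x_r + α^q(x₁^{2q}+⋯+x_{r−1}^{2q}) − α(x₁²+⋯+x_{r−1}²)
  = (β^q−β)(x₁^{q+1}+⋯+x_{r−1}^{q+1})`. -/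
def affEq {F : Type*} [Field F] (q r : ℕ) (α β : F) (x : Fin (r + 1) → F) : Prop :=
  x (Fin.last r) ^ q - x (Fin.last r)
      + α ^ q * (∑ i : Fin (r + 1), if 1 ≤ i.1 ∧ i.1 < r then x i ^ (2 * q) else 0)
      - α * (∑ i : Fin (r + 1), if 1 ≤ i.1 ∧ i.1 < r then x i ^ 2 else 0)
    = (β ^ q - β) * (∑ i : Fin (r + 1), if 1 ≤ i.1 ∧ i.1 < r then x i ^ (q + 1) else 0)

/-- The hypersurface `B` of `PG(r,q²)`: the affine points (X₀ ≠ 0) whose affine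
coordinates satisfy `affEq`, together with the points at infinity (X₀ = 0)
satisfying `X₁² + ⋯ + X_{r−1}² = 0`. -/
noncomputable def Bset (F : Type*) [Field F] (q r : ℕ) (α β : F) :
    Set (Projectivization F (Fin (r + 1) → F)) :=
  {P | (P.rep 0 ≠ 0 ∧ affEq q r α β fun i => P.rep i / P.rep 0) ∨
       (P.rep 0 = 0 ∧ (∑ i : Fin (r + 1), if 1 ≤ i.1 ∧ i.1 < r then P.rep i ^ 2 else 0) = 0)}

/-- The codeword of the projective code associated to the projective system `V`
corresponding to the linear functional `f`. -/
noncomputable def cw {F W : Type*} [Field F] [AddCommGroup W] [Module F W]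
    (V : Set (Projectivization F W)) (f : Module.Dual F W) : ↥V → F :=
  fun P => f P.1.rep

/-- A nonzero codeword is minimal if every nonzero codeword whose support is contained
in its support is a scalar multiple of it. -/
def IsMinimalWord {F W : Type*} [Field F] [AddCommGroup W] [Module F W]
    (V : Set (Projectivization F W)) (f : Module.Dual F W) : Prop :=
  cw V f ≠ 0 ∧ ∀ g : Module.Dual F W, cw V g ≠ 0 →
    (∀ P : ↥V, cw V g P ≠ 0 → cw V f P ≠ 0) → ∃ a : F, cw V g = a • cw V f

/-- The projective code of `V` is a minimal code if all of its nonzero codewords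
are minimal. -/
def IsMinimalCode {F W : Type*} [Field F] [AddCommGroup W] [Module F W]
    (V : Set (Projectivization F W)) : Prop :=
  ∀ f : Module.Dual F W, cw V f ≠ 0 → IsMinimalWord V f

/-!
`B` is a cutting set: it meets every hyperplane in a spanning set of that hyperplane. This gives
both the spanning of the whole space and the minimality of the code.

Write `δ = β ^ q - β`. The affine equation of `B` says `x_r ^ q - x_r + Q(x₁) + ⋯ + Q(x_{r-1}) = 0`,
where `Q` is a quadratic form over the subfield of order `q` with values in the line of elements
with `x ^ q = -x`. Substituting the equation `x_r = m₀ + m₁ x₁ + ⋯ + m_{r-1} x_{r-1}` of a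
hyperplane leaves a level set of a sum of terms `T_j(x_j)`. Any two of the terms together take every
value of the line, because `Q ≠ 0` and a sum of two quadratic polynomials in separate variables over
a field of odd order has a root; and no `T_j` is injective, as it maps `q²` elements to `q`. Since
`r - 1 > 2`, a third coordinate can be moved while two others solve the equation, so the level set
lies in no proper affine subspace. The affine part of a hyperplane through `(0 : ⋯ : 0 : 1)` is a
union of vertical lines, each with points of `B`. There remains the hyperplane at infinity, where
the cone over `X₁² + ⋯ + X_{r-1}² = 0` spans because `-1` is a square.

For the length, `x_r ↦ x_r ^ q - x_r` has fibers of size `q`, so there are `q ^ (2r - 1)` affine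
points, and the cone at infinity is counted by splitting off two squares at a time.
-/

open Module

section CuttingSets

variable {F W : Type*} [Field F] [AddCommGroup W] [Module F W] {V : Set (Projectivization F W)}

/-- `V` is a cutting set (a strong blocking set) if it meets every hyperplane in a spanning set of
that hyperplane. The functional `f = 0` is allowed as well, so that a cutting set spans the whole
space. -/
def IsCuttingSet (V : Set (Projectivization F W)) : Prop :=
  ∀ f : Dual F W, LinearMap.ker f ≤ Submodule.span F (Projectivization.rep '' V ∩ LinearMap.ker f)

lemma IsCuttingSet.span_eq_top (hV : IsCuttingSet V) :
    Submodule.span F (Projectivization.rep '' V) = ⊤ :=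
  top_le_iff.1 <| by simpa using hV 0

lemma exists_eq_smul_of_ker_le_ker {f g : Dual F W} (h : LinearMap.ker f ≤ LinearMap.ker g) :
    ∃ a : F, g = a • f := by
  have hg : g ∈ Submodule.span F (Set.range fun _ : Unit ↦ f) :=
    mem_span_of_iInf_ker_le_ker (by simpa using h)
  rw [Set.range_const, Submodule.mem_span_singleton] at hg
  exact hg.imp fun _ ↦ Eq.symm

lemma IsCuttingSet.isMinimalCode (hV : IsCuttingSet V) : IsMinimalCode V := by
  refine fun f hf ↦ ⟨hf, fun g _ hsupp ↦ ?_⟩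
  have hzeros : Projectivization.rep '' V ∩ LinearMap.ker f ⊆ LinearMap.ker g := by
    rintro _ ⟨⟨P, hP, rfl⟩, hfP⟩
    exact not_not.1 fun hgP ↦ hsupp ⟨P, hP⟩ hgP hfP
  obtain ⟨a, rfl⟩ := exists_eq_smul_of_ker_le_ker ((hV f).trans (Submodule.span_le.2 hzeros))
  exact ⟨a, rfl⟩

lemma isCuttingSet_of_forall_dual
    (hV : ∀ f g : Dual F W, (∀ v (hv : v ≠ 0), Projectivization.mk F v hv ∈ V → f v = 0 → g v = 0) →
      LinearMap.ker f ≤ LinearMap.ker g) : IsCuttingSet V := by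
  intro f w hw
  by_contra hspan
  obtain ⟨g, hgw, hg⟩ := Submodule.exists_le_ker_of_notMem hspan
  refine hgw (hV f g (fun v hv hvV hfv ↦ ?_) hw)
  obtain ⟨a, ha⟩ := Projectivization.exists_smul_eq_mk_rep F v hv
  have hfrep : f ((a : F) • v) = 0 := by rw [map_smul, hfv, smul_zero]
  have hgrep : g ((a : F) • v) = 0 := hg (Submodule.subset_span ⟨⟨_, hvV, ha.symm⟩, hfrep⟩)
  rw [map_smul, smul_eq_mul] at hgrep
  exact (mul_eq_zero.1 hgrep).resolve_left a.ne_zero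

lemma card_cone_eq [Finite F] [Finite W] {C : Set W} (h0 : 0 ∈ C)
    (hC : ∀ v (hv : v ≠ 0), Projectivization.mk F v hv ∈ V ↔ v ∈ C) :
    Nat.card C = Nat.card V * (Nat.card F - 1) + 1 := by
  let nonzeroEquiv : {v : {v : W // v ≠ 0} // v.1 ∈ C} ≃ V × Fˣ :=
    ((Projectivization.nonZeroEquivProjectivizationProdUnits F W).subtypeEquiv
      fun v ↦ (hC v.1 v.2).symm).trans Equiv.prodSubtypeFstEquivSubtypeProd
  have hnonzero : {v : {v : W // v ≠ 0} // v.1 ∈ C} ≃ ↥(C \ {0}) :=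
    (Equiv.subtypeSubtypeEquivSubtypeInter (· ≠ 0) (· ∈ C)).trans
      (Equiv.subtypeEquivRight fun _ ↦ and_comm)
  rw [← Nat.card_units, ← Nat.card_prod, ← Nat.card_congr nonzeroEquiv, Nat.card_congr hnonzero,
    Nat.card_coe_set_eq, Nat.card_coe_set_eq, Set.ncard_sdiff_singleton_add_one h0]

end CuttingSets

section SumsOfSquares

variable {F : Type*} [Field F]

/-- The zero set of the quadratic form `∑ xⱼ²`, whose projectivization is the base of the cone that
`B` has at infinity. -/
def isotropicVectors (F ι : Type*) [Field F] [Fintype ι] : Set (ι → F) :=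
  {x | ∑ j, x j ^ 2 = 0}

lemma dual_eq_zero_of_isotropicVectors {ι : Type*} [Fintype ι] [Nontrivial ι]
    (h2 : (2 : F) ≠ 0) (hneg : IsSquare (-1 : F)) {φ : Dual F (ι → F)}
    (hφ : ∀ x ∈ isotropicVectors F ι, φ x = 0) : φ = 0 := by
  classical
  obtain ⟨i, hi⟩ := hneg
  ext j
  obtain ⟨k, hkj⟩ := exists_ne j
  have hisotropic (z : F) (hz : z * z = -1) :
      Pi.single j 1 + Pi.single k z ∈ isotropicVectors F ι := by
    have hsq (l : ι) : (Pi.single j 1 + Pi.single k z : ι → F) l ^ 2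
        = (Pi.single j 1 : ι → F) l + (Pi.single k (-1) : ι → F) l := by
      rcases eq_or_ne l j with rfl | hlj
      · simp [hkj.symm]
      · rcases eq_or_ne l k with rfl | hlk
        · simp [hlj, pow_two, hz]
        · simp [hlj, hlk]
    change ∑ l, (Pi.single j 1 + Pi.single k z : ι → F) l ^ 2 = 0
    simp [hsq, Finset.sum_add_distrib, -Pi.add_apply]
  have hplus := hφ _ (hisotropic i hi.symm)
  have hminus := hφ _ (hisotropic (-i) (by rw [neg_mul_neg, hi]))
  rw [Pi.single_neg] at hminus
  simp only [map_add, map_neg] at hplus hminus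
  have htwice : 2 * φ (Pi.single j 1) = 0 := by linear_combination hplus + hminus
  exact (mul_eq_zero.1 htwice).resolve_left h2

lemma card_mul_eq [Finite F] [DecidableEq F] (c : F) :
    Nat.card {p : F × F // p.1 * p.2 = c} + 1
      = Nat.card F + if c = 0 then Nat.card F else 0 := by
  have := Fintype.ofFinite F
  have hfiber (u : F) : Nat.card {v : F // u * v = c}
      = if u = 0 then (if c = 0 then Nat.card F else 0) else 1 := by
    rcases eq_or_ne u 0 with rfl | hu
    · rcases eq_or_ne c 0 with rfl | hc
      · simp
      · simp [hc, hc.symm]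
    · simp [hu, ← eq_inv_mul_iff_mul_eq₀ hu]
  rw [Nat.card_congr (Equiv.subtypeProdEquivSigmaSubtype fun u v : F ↦ u * v = c), Nat.card_sigma,
    Fintype.sum_eq_add_sum_compl 0, Finset.sum_congr rfl fun u hu ↦ (hfiber u).trans
      (if_neg (by simpa using hu)), hfiber, if_pos rfl, Finset.sum_const, smul_eq_mul, mul_one,
    Finset.card_compl, Finset.card_singleton, Nat.card_eq_fintype_card]
  have := Fintype.card_pos (α := F)
  omega

lemma card_sq_add_sq_eq [Finite F] [DecidableEq F] (h2 : (2 : F) ≠ 0) (hneg : IsSquare (-1 : F))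
    (c : F) : Nat.card {p : F × F // p.1 ^ 2 + p.2 ^ 2 = c} + 1
      = Nat.card F + if c = 0 then Nat.card F else 0 := by
  obtain ⟨i, hi⟩ := hneg
  have hi0 : i ≠ 0 := by rintro rfl; simp at hi
  let lightCone : F × F ≃ F × F :=
    { toFun := fun p ↦ (p.1 + i * p.2, p.1 - i * p.2)
      invFun := fun p ↦ ((p.1 + p.2) / 2, (p.1 - p.2) / (2 * i))
      left_inv := fun p ↦ by ext <;> simp only <;> field_simp <;> ring
      right_inv := fun p ↦ by ext <;> simp only <;> field_simp <;> ring }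
  rw [← card_mul_eq c, Nat.card_congr (lightCone.subtypeEquiv fun p ↦ ?_)]
  have hfactor : p.1 ^ 2 + p.2 ^ 2 = (p.1 + i * p.2) * (p.1 - i * p.2) := by
    linear_combination -p.2 ^ 2 * hi
  rw [hfactor]
  rfl

lemma card_isotropicVectors_add_two [Finite F] (h2 : (2 : F) ≠ 0) (hneg : IsSquare (-1 : F))
    (n : ℕ) : Nat.card (isotropicVectors F (Fin (n + 2))) + Nat.card F ^ n
      = Nat.card F ^ (n + 1) + Nat.card F * Nat.card (isotropicVectors F (Fin n)) := by
  classical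
  have := Fintype.ofFinite F
  let splitTwo : (Fin (n + 2) → F) ≃ (Fin n → F) × F × F :=
    { toFun := fun x ↦ (fun j ↦ x j.succ.succ, x 0, x 1)
      invFun := fun p ↦ Fin.cons p.2.1 (Fin.cons p.2.2 p.1 : Fin (n + 1) → F)
      left_inv := fun x ↦ by
        ext j
        refine Fin.cases rfl (fun j ↦ Fin.cases rfl (fun j ↦ rfl) j) j
      right_inv := fun p ↦ rfl }
  have hsplit : Nat.card (isotropicVectors F (Fin (n + 2)))
      = ∑ w : Fin n → F, Nat.card {p : F × F // p.1 ^ 2 + p.2 ^ 2 = -∑ j, w j ^ 2} := by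
    rw [← Nat.card_sigma, ← Nat.card_congr (Equiv.subtypeProdEquivSigmaSubtype
      fun (w : Fin n → F) (p : F × F) ↦ p.1 ^ 2 + p.2 ^ 2 = -∑ j, w j ^ 2)]
    refine Nat.card_congr (splitTwo.subtypeEquiv fun x ↦ ?_)
    simp only [isotropicVectors, Set.mem_ofPred_eq, Fin.sum_univ_succ, ← add_assoc]
    exact add_eq_zero_iff_eq_neg
  have hfibers : ∑ w : Fin n → F, (Nat.card {p : F × F // p.1 ^ 2 + p.2 ^ 2 = -∑ j, w j ^ 2} + 1)
      = ∑ w : Fin n → F, (Nat.card F + if ∑ j, w j ^ 2 = 0 then Nat.card F else 0) :=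
    Finset.sum_congr rfl fun w _ ↦ by simp only [card_sq_add_sq_eq h2 hneg, neg_eq_zero]
  have hzeros : Nat.card (isotropicVectors F (Fin n))
      = (Finset.univ.filter fun w : Fin n → F ↦ ∑ j, w j ^ 2 = 0).card := by
    rw [← Fintype.card_subtype, ← Nat.card_eq_fintype_card]
    rfl
  simp only [Finset.sum_add_distrib, ← Finset.sum_filter, Finset.sum_const, smul_eq_mul, mul_one,
    Finset.card_univ, ← Nat.card_eq_fintype_card, Nat.card_fun, Nat.card_fin, ← hsplit,
    ← hzeros] at hfibers
  rw [hfibers]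
  ring

lemma card_mul_card_isotropicVectors_odd [Finite F] (h2 : (2 : F) ≠ 0) (hneg : IsSquare (-1 : F))
    (k : ℕ) : Nat.card F * Nat.card (isotropicVectors F (Fin (2 * k + 1)))
      = Nat.card F ^ (2 * k + 1) := by
  induction k with
  | zero =>
    have hzero : isotropicVectors F (Fin 1) = {0} := by
      ext x
      simp [isotropicVectors, funext_iff]
    simp [hzero]
  | succ k ih =>
    have hstep := card_isotropicVectors_add_two h2 hneg (2 * k + 1)
    zify at hstep ih ⊢
    linear_combination (Nat.card F : ℤ) * hstep + (Nat.card F : ℤ) * ih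

lemma card_mul_card_isotropicVectors_even [Finite F] (h2 : (2 : F) ≠ 0) (hneg : IsSquare (-1 : F))
    (k : ℕ) : Nat.card F * Nat.card (isotropicVectors F (Fin (2 * k))) + Nat.card F ^ k
      = Nat.card F ^ (2 * k) + Nat.card F ^ (k + 1) := by
  induction k with
  | zero => simp [isotropicVectors, add_comm]
  | succ k ih =>
    have hstep := card_isotropicVectors_add_two h2 hneg (2 * k)
    zify at hstep ih ⊢
    linear_combination (Nat.card F : ℤ) * hstep + (Nat.card F : ℤ) * ih

end SumsOfSquares

section Involution

variable {F : Type*} [Field F] [StarRing F]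

lemma mem_selfAdjoint_iff_mul_mem_skewAdjoint {x δ : F} (hδ : δ ∈ skewAdjoint F) (hδ0 : δ ≠ 0) :
    x ∈ selfAdjoint F ↔ x * δ ∈ skewAdjoint F := by
  rw [selfAdjoint.mem_iff, skewAdjoint.mem_iff, star_mul', skewAdjoint.mem_iff.1 hδ, mul_neg,
    neg_inj, mul_left_inj' hδ0]

lemma star_sub_self_mem_skewAdjoint (x : F) : star x - x ∈ skewAdjoint F := by
  simp [skewAdjoint.mem_iff]

lemma exists_star_sub_self_eq (h2 : (2 : F) ≠ 0) {c : F} (hc : c ∈ skewAdjoint F) :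
    ∃ b, star b - b = c := by
  refine ⟨-c / 2, ?_⟩
  rw [star_div₀, star_neg, skewAdjoint.mem_iff.1 hc, star_ofNat]
  field_simp
  ring

lemma card_star_sub_self_eq (h2 : (2 : F) ≠ 0) {c : F} (hc : c ∈ skewAdjoint F) :
    Nat.card {b : F // star b - b = c} = Nat.card (selfAdjoint F) := by
  obtain ⟨b₀, rfl⟩ := exists_star_sub_self_eq h2 hc
  refine Nat.card_congr ((Equiv.subRight b₀).subtypeEquiv fun b ↦ ?_)
  rw [Equiv.subRight_apply, selfAdjoint.mem_iff, star_sub, sub_eq_sub_iff_sub_eq_sub]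

lemma card_skewAdjoint (hstar : ∃ x : F, star x ≠ x) :
    Nat.card (skewAdjoint F) = Nat.card (selfAdjoint F) := by
  obtain ⟨x, hx⟩ := hstar
  have hδ0 : star x - x ≠ 0 := sub_ne_zero.2 hx
  exact (Nat.card_congr ((Equiv.mulRight₀ _ hδ0).subtypeEquiv fun _ ↦
    mem_selfAdjoint_iff_mul_mem_skewAdjoint (star_sub_self_mem_skewAdjoint x) hδ0)).symm

lemma card_selfAdjoint_sq [Finite F] (h2 : (2 : F) ≠ 0) (hstar : ∃ x : F, star x ≠ x) :
    Nat.card (selfAdjoint F) ^ 2 = Nat.card F := by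
  have := Fintype.ofFinite (skewAdjoint F)
  let starSub (b : F) : skewAdjoint F := ⟨star b - b, star_sub_self_mem_skewAdjoint b⟩
  have hfiber (c : skewAdjoint F) : Nat.card {b // starSub b = c} = Nat.card (selfAdjoint F) := by
    simp only [starSub, Subtype.ext_iff, card_star_sub_self_eq h2 c.2]
  rw [← Nat.card_congr (Equiv.sigmaFiberEquiv starSub), Nat.card_sigma,
    Finset.sum_congr rfl fun c _ ↦ hfiber c, Finset.sum_const, Finset.card_univ,
    ← Nat.card_eq_fintype_card, card_skewAdjoint hstar, smul_eq_mul, pow_two]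

/-- The contribution of one affine coordinate `y` to the affine equation
`star b - b + ∑ⱼ skewForm α δ (xⱼ) = 0` of `B`, where `star` is `x ↦ x ^ q` and `δ = β ^ q - β`.
It is a quadratic form over the fixed field of `star`, with skew-adjoint values. -/
def skewForm (α δ y : F) : F :=
  star (α * y ^ 2) - α * y ^ 2 - δ * (y * star y)

variable {α δ : F}

lemma skewForm_mem_skewAdjoint (hδ : δ ∈ skewAdjoint F) (y : F) :
    skewForm α δ y ∈ skewAdjoint F := by
  rw [skewAdjoint.mem_iff] at hδ ⊢
  simp only [skewForm, star_sub, star_mul', star_pow, star_star, hδ]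
  ring

lemma exists_skewForm_ne_zero (hstar : ∃ x : F, star x ≠ x) (hαδ : α ≠ 0 ∨ δ ≠ 0) :
    ∃ u, skewForm α δ u ≠ 0 := by
  obtain ⟨ε, hε⟩ := hstar
  by_contra! hzero
  have hδ : δ = star α - α := by
    linear_combination -(by simpa [skewForm] using hzero 1 : star α - α - δ = 0)
  have hskew (u : F) (hu : star u ≠ u) : star α * star u = -(α * u) := by
    have hfactor : (star u - u) * (star α * star u + α * u) = 0 := by
      have hzero_u := hzero u
      simp only [skewForm, star_mul', star_pow, hδ] at hzero_u
      linear_combination hzero_u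
    exact eq_neg_of_add_eq_zero_left ((mul_eq_zero.1 hfactor).resolve_left (sub_ne_zero.2 hu))
  have hα_star : star α = -α := by
    have hshift := hskew (ε + 1) (by simpa using hε)
    rw [star_add, star_one] at hshift
    linear_combination hshift - hskew ε hε
  have hα : α = 0 := by
    have hmul : α * (star ε - ε) = 0 := by
      linear_combination star ε * hα_star - hskew ε hε
    exact (mul_eq_zero.1 hmul).resolve_right (sub_ne_zero.2 hε)
  simp [hα, hδ] at hαδ

/-- The contribution of the coordinate `y` to the equation of the section of `B` by a hyperplane
`b = m₀ + ⋯ + m * y + ⋯`. -/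
def sectionTerm (α δ m y : F) : F :=
  star (m * y) - m * y + skewForm α δ y

lemma sectionTerm_mem_skewAdjoint (hδ : δ ∈ skewAdjoint F) (m y : F) :
    sectionTerm α δ m y ∈ skewAdjoint F :=
  add_mem (star_sub_self_mem_skewAdjoint _) (skewForm_mem_skewAdjoint hδ y)

lemma sectionTerm_selfAdjoint_mul (m u : F) (s : selfAdjoint F) :
    sectionTerm α δ m (s * u) = skewForm α δ u * s ^ 2 + (star (m * u) - m * u) * s := by
  have hs : star (s : F) = s := s.2
  simp only [sectionTerm, skewForm, star_mul', star_pow, hs]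
  ring

lemma not_injective_sectionTerm [Finite F] (h2 : (2 : F) ≠ 0) (hstar : ∃ x : F, star x ≠ x)
    (hδ : δ ∈ skewAdjoint F) (m : F) : ¬ Function.Injective (sectionTerm α δ m) := by
  intro hinj
  have hle : Nat.card F ≤ Nat.card (skewAdjoint F) :=
    Nat.card_le_card_of_injective
      (fun y ↦ (⟨_, sectionTerm_mem_skewAdjoint hδ m y⟩ : skewAdjoint F))
      fun _ _ h ↦ hinj (congrArg Subtype.val h)
  rw [card_skewAdjoint hstar, ← card_selfAdjoint_sq h2 hstar] at hle
  have hlt : 1 < Nat.card (selfAdjoint F) := Finite.one_lt_card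
  nlinarith

lemma odd_card_selfAdjoint [Fintype (selfAdjoint F)] (h2 : (2 : F) ≠ 0) :
    Fintype.card (selfAdjoint F) % 2 = 1 :=
  FiniteField.odd_card_of_char_ne_two fun hchar ↦ h2 <| by
    have htwo : (2 : selfAdjoint F) = 0 := by
      exact_mod_cast hchar ▸ CharP.cast_eq_zero (selfAdjoint F) (ringChar (selfAdjoint F))
    simpa [← one_add_one_eq_two] using congrArg Subtype.val htwo

open Polynomial in
lemma exists_sectionTerm_add_eq [Finite F] (h2 : (2 : F) ≠ 0) (hstar : ∃ x : F, star x ≠ x)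
    (hαδ : α ≠ 0 ∨ δ ≠ 0) (hδ : δ ∈ skewAdjoint F) (m₁ m₂ : F) {c : F}
    (hc : c ∈ skewAdjoint F) :
    ∃ z₁ z₂, sectionTerm α δ m₁ z₁ + sectionTerm α δ m₂ z₂ = c := by
  have := Fintype.ofFinite (selfAdjoint F)
  obtain ⟨u, hu⟩ := exists_skewForm_ne_zero hstar hαδ
  let divByForm (d : F) (hd : d ∈ skewAdjoint F) : selfAdjoint F :=
    ⟨d / skewForm α δ u, (mem_selfAdjoint_iff_mul_mem_skewAdjoint
      (skewForm_mem_skewAdjoint hδ u) hu).2 (by rwa [div_mul_cancel₀ _ hu])⟩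
  let slope (m : F) : selfAdjoint F :=
    divByForm (star (m * u) - m * u) (star_sub_self_mem_skewAdjoint _)
  obtain ⟨s, t, hst⟩ := FiniteField.exists_root_sum_quadratic
    (f := C 1 * X ^ 2 + C (slope m₁) * X + C (-divByForm c hc))
    (g := C 1 * X ^ 2 + C (slope m₂) * X + C 0)
    (degree_quadratic one_ne_zero) (degree_quadratic one_ne_zero) (odd_card_selfAdjoint h2)
  refine ⟨s * u, t * u, ?_⟩
  have hroot : (s : F) ^ 2 + (star (m₁ * u) - m₁ * u) / skewForm α δ u * s
        - c / skewForm α δ u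
      + ((t : F) ^ 2 + (star (m₂ * u) - m₂ * u) / skewForm α δ u * t) = 0 := by
    simpa [slope, divByForm, sub_eq_add_neg] using congrArg Subtype.val hst
  rw [sectionTerm_selfAdjoint_mul, sectionTerm_selfAdjoint_mul]
  generalize star (m₁ * u) - m₁ * u = d₁ at *
  generalize star (m₂ * u) - m₂ * u = d₂ at *
  field_simp at hroot
  linear_combination hroot

end Involution

section LevelSets

variable {ι M F : Type*} [Fintype ι] [AddCommGroup M]

lemma sum_update_apply [DecidableEq ι] (T : ι → F → M) (x : ι → F) (j : ι) (y : F) :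
    ∑ l, T l (Function.update x j y l) = T j y - T j (x j) + ∑ l, T l (x l) := by
  simp only [Function.apply_update T, Finset.sum_update_of_mem (Finset.mem_univ j),
    Finset.sum_eq_add_sum_sdiff_singleton_of_mem (Finset.mem_univ j) (fun l ↦ T l (x l))]
  abel

lemma exists_sum_apply_eq {A : AddSubgroup M} {T : ι → F → M} (hT : ∀ j y, T j y ∈ A)
    (hsum : ∀ j k, j ≠ k → ∀ c ∈ A, ∃ y z, T j y + T k z = c) {c : M} (hc : c ∈ A)
    (x : ι → F) {j k : ι} (hjk : j ≠ k) :
    ∃ x' : ι → F, (∀ l, l ≠ j → l ≠ k → x' l = x l) ∧ ∑ l, T l (x' l) = c := by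
  classical
  obtain ⟨y, z, hyz⟩ := hsum j k hjk (c - ∑ l, T l (x l) + T j (x j) + T k (x k))
    (add_mem (add_mem (sub_mem hc (sum_mem fun l _ ↦ hT l _)) (hT _ _)) (hT _ _))
  refine ⟨Function.update (Function.update x j y) k z, fun l hlj hlk ↦ by simp [hlj, hlk], ?_⟩
  rw [sum_update_apply, sum_update_apply, Function.update_of_ne hjk.symm]
  calc T k z - T k (x k) + (T j y - T j (x j) + ∑ l, T l (x l))
      = T j y + T k z - (T j (x j) + T k (x k)) + ∑ l, T l (x l) := by abel
    _ = c := by rw [hyz]; abel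

/-- Two coordinates suffice to solve the equation of the level set, so a third one can be moved
along a fiber of `T j` while the others stay fixed. -/
lemma dual_zero_single_eq_zero_of_level_set [DecidableEq ι] [Field F] (hι : 2 < Fintype.card ι)
    {A : AddSubgroup M} {T : ι → F → M} (hT : ∀ j y, T j y ∈ A)
    (hsum : ∀ j k, j ≠ k → ∀ c ∈ A, ∃ y z, T j y + T k z = c) {c : M} (hc : c ∈ A)
    {G : Dual F (F × (ι → F))} (hG : ∀ x : ι → F, ∑ j, T j (x j) = c → G (1, x) = 0)
    {j : ι} (hinj : ¬ Function.Injective (T j)) : G (0, Pi.single j 1) = 0 := by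
  obtain ⟨y, y', hyy', hne⟩ : ∃ y y', T j y = T j y' ∧ y ≠ y' := by
    simpa [Function.Injective] using hinj
  obtain ⟨k, hkj, l, hlj, hkl⟩ : ∃ k, k ≠ j ∧ ∃ l, l ≠ j ∧ k ≠ l := by
    have hcard : 1 < (Finset.univ.erase j).card := by
      rw [Finset.card_erase_of_mem (Finset.mem_univ j), Finset.card_univ]
      omega
    simpa using Finset.one_lt_card.1 hcard
  obtain ⟨x, hxeq, hx⟩ := exists_sum_apply_eq hT hsum hc (fun _ ↦ y) hkl
  have hxj : x j = y := hxeq j hkj.symm hlj.symm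
  have hx' : ∑ l, T l (Function.update x j y' l) = c := by
    rw [sum_update_apply, hxj, hyy', sub_self, zero_add, hx]
  have hdiff : ((1 : F), x) - (1, Function.update x j y')
      = (y - y') • ((0 : F), (Pi.single j 1 : ι → F)) := by
    refine Prod.ext (by simp) (funext fun i ↦ ?_)
    rcases eq_or_ne i j with rfl | hij
    · simp [hxj]
    · simp [hij]
  have hmul : (y - y') * G (0, Pi.single j 1) = 0 := by
    rw [← smul_eq_mul, ← map_smul, ← hdiff, map_sub, hG _ hx, hG _ hx', sub_self]
  exact (mul_eq_zero.1 hmul).resolve_left (sub_ne_zero.2 hne)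

lemma dual_prod_eq_zero_of_level_set [Field F] (hι : 2 < Fintype.card ι) {A : AddSubgroup M}
    {T : ι → F → M} (hT : ∀ j y, T j y ∈ A) (hinj : ∀ j, ¬ Function.Injective (T j))
    (hsum : ∀ j k, j ≠ k → ∀ c ∈ A, ∃ y z, T j y + T k z = c) {c : M} (hc : c ∈ A)
    {G : Dual F (F × (ι → F))} (hG : ∀ x : ι → F, ∑ j, T j (x j) = c → G (1, x) = 0) :
    G = 0 := by
  classical
  have hright : G ∘ₗ LinearMap.inr F F (ι → F) = 0 :=
    LinearMap.pi_ext' fun j ↦ LinearMap.ext_ring <| by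
      simpa using dual_zero_single_eq_zero_of_level_set hι hT hsum hc hG (hinj j)
  obtain ⟨j, k, hjk⟩ := Fintype.exists_pair_of_one_lt_card (Nat.lt_of_succ_lt hι)
  obtain ⟨x, -, hx⟩ := exists_sum_apply_eq hT hsum hc 0 hjk
  have hleft : G (1, 0) = 0 := by
    have hsplit : G (1, x) = G (1, 0) + G (0, x) := by
      rw [← map_add, Prod.mk_add_mk, add_zero, zero_add]
    rw [hG x hx, show G (0, x) = 0 from LinearMap.congr_fun hright x, add_zero] at hsplit
    exact hsplit.symm
  exact LinearMap.prod_ext (LinearMap.ext_ring (by simpa using hleft)) (by simpa using hright)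

end LevelSets

section Cone

variable {F ι : Type*} [Field F] [Fintype ι]

lemma ker_le_ker_of_forall_one_of_isotropicVectors [Nontrivial ι] (h2 : (2 : F) ≠ 0)
    (hneg : IsSquare (-1 : F)) {φ γ : Dual F (F × (ι → F))}
    (haffine : ∀ x, φ (1, x) = 0 → γ (1, x) = 0)
    (hinfinity : ∀ x ∈ isotropicVectors F ι, φ (0, x) = 0 → γ (0, x) = 0) :
    LinearMap.ker φ ≤ LinearMap.ker γ := by
  have hzero (x : ι → F) (hx : φ (0, x) = 0) : γ (0, x) = 0 := by
    by_cases hφ : ∃ x₀, φ (0, x₀) ≠ 0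
    · obtain ⟨x₀, hx₀⟩ := hφ
      let x₁ : ι → F := (-φ (1, 0) / φ (0, x₀)) • x₀
      have hx₁ : φ (1, x₁) = 0 := by
        have hsplit : ((1 : F), x₁) = (1, 0) + (-φ (1, 0) / φ (0, x₀)) • (0, x₀) := by simp [x₁]
        rw [hsplit, map_add, map_smul, smul_eq_mul, div_mul_cancel₀ _ hx₀, add_neg_cancel]
      have hsum : ((1 : F), x₁ + x) = (1, x₁) + (0, x) := by simp
      have hγ := haffine (x₁ + x) (by rw [hsum, map_add, hx₁, hx, add_zero])
      rwa [hsum, map_add, haffine x₁ hx₁, zero_add] at hγ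
    · push Not at hφ
      have hγ : γ ∘ₗ LinearMap.inr F F (ι → F) = 0 :=
        dual_eq_zero_of_isotropicVectors h2 hneg fun y hy ↦ hinfinity y hy (hφ y)
      exact LinearMap.congr_fun hγ x
  rintro ⟨a, x⟩ hax
  rw [LinearMap.mem_ker] at hax ⊢
  rcases eq_or_ne a 0 with rfl | ha
  · exact hzero x hax
  · have hscale : ((a, x) : F × (ι → F)) = a • (1, a⁻¹ • x) := by simp [ha]
    rw [hscale, map_smul, smul_eq_zero_iff_right ha] at hax ⊢
    exact haffine _ hax

variable [StarRing F]

/-- The affine points of `B`, in coordinates `(x, b)` with `x = (x₁, …, x_{r-1})` and `b = x_r`. -/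
def affineSolutions (ι : Type*) [Fintype ι] (α δ : F) : Set ((ι → F) × F) :=
  {p | star p.2 - p.2 + ∑ j, skewForm α δ (p.1 j) = 0}

/-- The cone of vectors representing the points of `B`, together with `0`, in coordinates
`(X₀, (X₁, …, X_{r-1}), X_r)`. -/
def hypersurfaceCone (ι : Type*) [Fintype ι] (α δ : F) : Set (F × (ι → F) × F) :=
  {w | w.1 ≠ 0 ∧ w.1⁻¹ • w.2 ∈ affineSolutions ι α δ ∨ w.1 = 0 ∧ w.2.1 ∈ isotropicVectors F ι}

variable {α δ : F}

lemma one_mem_hypersurfaceCone {p : (ι → F) × F} (hp : p ∈ affineSolutions ι α δ) :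
    (1, p) ∈ hypersurfaceCone ι α δ :=
  .inl ⟨one_ne_zero, by simpa using hp⟩

lemma zero_mem_hypersurfaceCone_iff {p : (ι → F) × F} :
    (0, p) ∈ hypersurfaceCone ι α δ ↔ p.1 ∈ isotropicVectors F ι := by
  simp [hypersurfaceCone]

lemma zero_mem_hypersurfaceCone : 0 ∈ hypersurfaceCone ι α δ :=
  zero_mem_hypersurfaceCone_iff.2 (by simp [isotropicVectors])

lemma smul_mem_hypersurfaceCone_iff {a : F} (ha : a ≠ 0) {w : F × (ι → F) × F} :
    a • w ∈ hypersurfaceCone ι α δ ↔ w ∈ hypersurfaceCone ι α δ := by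
  have hscale : (a * w.1)⁻¹ • a • w.2 = w.1⁻¹ • w.2 := by
    rw [smul_smul, mul_inv_rev, mul_assoc, inv_mul_cancel₀ ha, mul_one]
  simp [hypersurfaceCone, isotropicVectors, hscale, ha, mul_pow, -mul_inv_rev, ← Finset.mul_sum]

lemma dual_eq_zero_of_section_affineSolutions [Finite F] (hι : 2 < Fintype.card ι)
    (h2 : (2 : F) ≠ 0) (hstar : ∃ x : F, star x ≠ x) (hαδ : α ≠ 0 ∨ δ ≠ 0)
    (hδ : δ ∈ skewAdjoint F) {m G : Dual F (F × (ι → F))}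
    (hG : ∀ x, (x, m (1, x)) ∈ affineSolutions ι α δ → G (1, x) = 0) : G = 0 := by
  classical
  let slope (j : ι) : F := m (0, fun i ↦ if j = i then 1 else 0)
  have hm (x : ι → F) : m (1, x) = m (1, 0) + ∑ j, slope j * x j := by
    have hsplit : ((1 : F), x) = (1, 0) + (0, x) := by simp
    have hexpand : m (0, x) = ∑ j, x j • slope j :=
      LinearMap.pi_apply_eq_sum_univ (m ∘ₗ LinearMap.inr F F (ι → F)) x
    simp only [hsplit, map_add, hexpand, smul_eq_mul, mul_comm]
  refine dual_prod_eq_zero_of_level_set hι (A := skewAdjoint F)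
    (T := fun j ↦ sectionTerm α δ (slope j)) (fun j y ↦ sectionTerm_mem_skewAdjoint hδ _ y)
    (fun j ↦ not_injective_sectionTerm h2 hstar hδ _)
    (fun j k _ c hc ↦ exists_sectionTerm_add_eq h2 hstar hαδ hδ _ _ hc)
    (neg_mem (star_sub_self_mem_skewAdjoint (m (1, 0)))) fun x hx ↦ hG x ?_
  simp only [sectionTerm, Finset.sum_add_distrib, Finset.sum_sub_distrib, ← star_sum] at hx
  rw [affineSolutions, Set.mem_ofPred_eq, hm, star_add]
  linear_combination hx

lemma ker_le_ker_of_hypersurfaceCone_of_apply_ne_zero [Finite F] (hι : 2 < Fintype.card ι)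
    (h2 : (2 : F) ≠ 0) (hstar : ∃ x : F, star x ≠ x) (hαδ : α ≠ 0 ∨ δ ≠ 0)
    (hδ : δ ∈ skewAdjoint F) {f g : Dual F (F × (ι → F) × F)}
    (hfg : ∀ w ∈ hypersurfaceCone ι α δ, f w = 0 → g w = 0) (hf : f (0, 0, 1) ≠ 0) :
    LinearMap.ker f ≤ LinearMap.ker g := by
  let base : F × (ι → F) →ₗ[F] F × (ι → F) × F := LinearMap.id.prodMap (LinearMap.inl F _ F)
  let g' : Dual F (F × (ι → F) × F) := g - (g (0, 0, 1) / f (0, 0, 1)) • f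
  let m : Dual F (F × (ι → F)) := -(f (0, 0, 1))⁻¹ • f ∘ₗ base
  have hsplit (h : Dual F (F × (ι → F) × F)) (a : F) (x : ι → F) (b : F) :
      h (a, x, b) = h (a, x, 0) + b * h (0, 0, 1) := by
    rw [← smul_eq_mul, ← map_smul, ← map_add]
    simp
  have hg' : g' (0, 0, 1) = 0 := by simp [g', hf]
  have hbase : g' ∘ₗ base = 0 := by
    refine dual_eq_zero_of_section_affineSolutions (m := m) hι h2 hstar hαδ hδ fun x hx ↦ ?_
    have hfw : f (1, x, m (1, x)) = 0 := by
      have hm : m (1, x) = -(f (1, x, 0) / f (0, 0, 1)) := by simp [m, base, div_eq_inv_mul]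
      rw [hsplit, hm, neg_mul, div_mul_cancel₀ _ hf, add_neg_cancel]
    have hg'w : g' (1, x, m (1, x)) = 0 := by
      simp [g', hfw, hfg _ (one_mem_hypersurfaceCone hx) hfw]
    rwa [hsplit, hg', mul_zero, add_zero] at hg'w
  rintro ⟨a, x, b⟩ hw
  rw [LinearMap.mem_ker] at hw ⊢
  have hg'w : g' (a, x, b) = 0 := by
    rw [hsplit, hg', mul_zero, add_zero]
    exact LinearMap.congr_fun hbase (a, x)
  simpa [g', hw] using hg'w

lemma ker_le_ker_of_hypersurfaceCone_of_apply_eq_zero [Nontrivial ι] (h2 : (2 : F) ≠ 0)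
    (hneg : IsSquare (-1 : F)) (hδ : δ ∈ skewAdjoint F) {f g : Dual F (F × (ι → F) × F)}
    (hfg : ∀ w ∈ hypersurfaceCone ι α δ, f w = 0 → g w = 0) (hf : f (0, 0, 1) = 0) :
    LinearMap.ker f ≤ LinearMap.ker g := by
  let base : F × (ι → F) →ₗ[F] F × (ι → F) × F := LinearMap.id.prodMap (LinearMap.inl F _ F)
  have hg : g (0, 0, 1) = 0 :=
    hfg _ (zero_mem_hypersurfaceCone_iff.2 (by simp [isotropicVectors])) hf
  have hdrop {h : Dual F (F × (ι → F) × F)} (hh : h (0, 0, 1) = 0) (a : F) (x : ι → F) (b : F) :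
      h (a, x, b) = (h ∘ₗ base) (a, x) := by
    have hsplit : (a, x, b) = base (a, x) + b • (0, 0, 1) := by simp [base]
    rw [hsplit, map_add, map_smul, hh, smul_zero, add_zero, LinearMap.comp_apply]
  have hker : LinearMap.ker (f ∘ₗ base) ≤ LinearMap.ker (g ∘ₗ base) := by
    refine ker_le_ker_of_forall_one_of_isotropicVectors h2 hneg (fun x hx ↦ ?_) fun x hx ↦
      hfg (0, x, 0) (zero_mem_hypersurfaceCone_iff.2 hx)
    obtain ⟨b, hb⟩ := exists_star_sub_self_eq h2
      (neg_mem (sum_mem fun j (_ : j ∈ Finset.univ) ↦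
        skewForm_mem_skewAdjoint (α := α) hδ (x j)))
    rw [← hdrop hf 1 x b] at hx
    rw [← hdrop hg 1 x b]
    exact hfg _ (one_mem_hypersurfaceCone (eq_neg_iff_add_eq_zero.1 hb)) hx
  rintro ⟨a, x, b⟩ hw
  rw [LinearMap.mem_ker, hdrop hf] at hw
  rw [LinearMap.mem_ker, hdrop hg]
  exact hker hw

lemma card_affineSolutions [Finite F] (h2 : (2 : F) ≠ 0) (hδ : δ ∈ skewAdjoint F) :
    Nat.card (affineSolutions ι α δ)
      = Nat.card F ^ Fintype.card ι * Nat.card (selfAdjoint F) := by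
  classical
  have := Fintype.ofFinite F
  have hfiber (x : ι → F) : Nat.card {b : F // (x, b) ∈ affineSolutions ι α δ}
      = Nat.card (selfAdjoint F) := by
    rw [← card_star_sub_self_eq h2 (neg_mem (sum_mem fun j (_ : j ∈ Finset.univ) ↦
      skewForm_mem_skewAdjoint (α := α) hδ (x j)))]
    exact Nat.card_congr (Equiv.subtypeEquivRight fun b ↦ eq_neg_iff_add_eq_zero.symm)
  calc Nat.card (affineSolutions ι α δ)
      = Nat.card (Σ x : ι → F, {b : F // (x, b) ∈ affineSolutions ι α δ}) :=
        Nat.card_congr (Equiv.subtypeProdEquivSigmaSubtype fun x b ↦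
          (x, b) ∈ affineSolutions ι α δ)
    _ = Nat.card F ^ Fintype.card ι * Nat.card (selfAdjoint F) := by
        rw [Nat.card_sigma, Finset.sum_congr rfl fun x _ ↦ hfiber x, Finset.sum_const,
          Finset.card_univ, Fintype.card_fun, smul_eq_mul, ← Nat.card_eq_fintype_card]

lemma card_hypersurfaceCone [Finite F] :
    Nat.card (hypersurfaceCone ι α δ)
      = (Nat.card F - 1) * Nat.card (affineSolutions ι α δ)
        + Nat.card (isotropicVectors F ι) * Nat.card F := by
  classical
  have := Fintype.ofFinite F
  have hinfinity : Nat.card {p // (0, p) ∈ hypersurfaceCone ι α δ}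
      = Nat.card (isotropicVectors F ι) * Nat.card F := by
    rw [← Nat.card_prod]
    exact Nat.card_congr ((Equiv.subtypeEquivRight fun _ ↦ zero_mem_hypersurfaceCone_iff).trans
      Equiv.prodSubtypeFstEquivSubtypeProd)
  have haffine (a : F) (ha : a ∈ ({0}ᶜ : Finset F)) :
      Nat.card {p // (a, p) ∈ hypersurfaceCone ι α δ} = Nat.card (affineSolutions ι α δ) := by
    have ha0 : a ≠ 0 := by simpa using ha
    exact Nat.card_congr ((LinearEquiv.smulOfNeZero F ((ι → F) × F) a⁻¹
      (inv_ne_zero ha0)).toEquiv.subtypeEquiv fun p ↦ by simp [hypersurfaceCone, ha0])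
  calc Nat.card (hypersurfaceCone ι α δ)
      = Nat.card (Σ a : F, {p // (a, p) ∈ hypersurfaceCone ι α δ}) :=
        Nat.card_congr (Equiv.subtypeProdEquivSigmaSubtype fun a p ↦
          (a, p) ∈ hypersurfaceCone ι α δ)
    _ = (Nat.card F - 1) * Nat.card (affineSolutions ι α δ)
        + Nat.card (isotropicVectors F ι) * Nat.card F := by
        rw [Nat.card_sigma, Fintype.sum_eq_add_sum_compl 0, hinfinity,
          Finset.sum_congr rfl haffine, Finset.sum_const, Finset.card_compl,
          Finset.card_singleton, smul_eq_mul, add_comm, Nat.card_eq_fintype_card (α := F)]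

end Cone

lemma eq_add_add_sub_div_sub_one_add_one {Q A M X e n : ℕ} (hQ : 1 < Q) (hn : n ≠ 0)
    (hM : M + e = Q ^ n + Q * e) (hX : X * (Q - 1) + 1 = (Q - 1) * A + M) :
    X = A + e + (Q ^ n - Q) / (Q - 1) + 1 := by
  obtain ⟨s, rfl⟩ : ∃ s, Q = s + 1 := ⟨Q - 1, by omega⟩
  obtain ⟨k, rfl⟩ := Nat.exists_eq_succ_of_ne_zero hn
  rw [Nat.add_sub_cancel] at hX ⊢
  have hs : 0 < s := by omega
  obtain ⟨m, hm⟩ : s ∣ (s + 1) ^ k - 1 := by simpa using Nat.sub_dvd_pow_sub_pow (s + 1) 1 k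
  have hpow : (s + 1) ^ (k + 1) = s * ((s + 1) * m) + (s + 1) := by
    have hpos : 0 < (s + 1) ^ k := by positivity
    rw [pow_succ, show (s + 1) ^ k = s * m + 1 by omega]
    ring
  rw [hpow, Nat.add_sub_cancel, Nat.mul_div_cancel_left _ hs]
  rw [hpow] at hM
  refine Nat.eq_of_mul_eq_mul_left hs ?_
  zify at hM hX ⊢
  linear_combination hX + hM

section Hypersurface

variable {F : Type*} [Field F] {q n : ℕ} {α β : F}

/-- The coordinates `(X₀, X₁, …, X_r) ↦ (X₀, (X₁, …, X_{r-1}), X_r)` with `r = n + 1`. -/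
def splitCoords (F : Type*) [Field F] (n : ℕ) : (Fin (n + 2) → F) ≃ₗ[F] F × (Fin n → F) × F where
  toFun v := (v 0, fun j ↦ v j.castSucc.succ, v (Fin.last (n + 1)))
  invFun w := Fin.cons w.1 (Fin.snoc w.2.1 w.2.2 : Fin (n + 1) → F)
  map_add' _ _ := rfl
  map_smul' _ _ := rfl
  left_inv v := by
    ext i
    refine Fin.cases rfl (fun j ↦ ?_) i
    refine Fin.lastCases ?_ (fun k ↦ ?_) j <;> simp [← Fin.succ_last]
  right_inv w := by
    ext <;> simp [← Fin.succ_last]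

lemma sum_ite_one_le_and_lt (h : Fin (n + 2) → F) :
    (∑ i : Fin (n + 2), if 1 ≤ i.1 ∧ i.1 < n + 1 then h i else 0)
      = ∑ j : Fin n, h j.castSucc.succ := by
  rw [Fin.sum_univ_succ, Fin.sum_univ_castSucc]
  simp

variable [StarRing F]

lemma affEq_iff_mem_affineSolutions (hstar : ∀ x : F, star x = x ^ q) (x : Fin (n + 2) → F) :
    affEq q (n + 1) α β x ↔ (splitCoords F n x).2 ∈ affineSolutions (Fin n) α (β ^ q - β) := by
  have hsum : ∑ j : Fin n, skewForm α (β ^ q - β) (x j.castSucc.succ)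
      = α ^ q * ∑ j : Fin n, x j.castSucc.succ ^ (2 * q) - α * ∑ j : Fin n, x j.castSucc.succ ^ 2
        - (β ^ q - β) * ∑ j : Fin n, x j.castSucc.succ ^ (q + 1) := by
    simp only [skewForm, hstar, mul_pow, ← pow_mul, ← pow_succ', Finset.sum_sub_distrib,
      Finset.mul_sum]
  change _ ↔ star (x (Fin.last (n + 1))) - x (Fin.last (n + 1))
    + ∑ j : Fin n, skewForm α (β ^ q - β) (x j.castSucc.succ) = 0
  rw [affEq, sum_ite_one_le_and_lt (fun i ↦ x i ^ (2 * q)),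
    sum_ite_one_le_and_lt (fun i ↦ x i ^ 2), sum_ite_one_le_and_lt (fun i ↦ x i ^ (q + 1)), hsum,
    hstar, ← sub_eq_zero]
  ring_nf

lemma mk_mem_Bset_iff (hstar : ∀ x : F, star x = x ^ q) {v : Fin (n + 2) → F} (hv : v ≠ 0) :
    Projectivization.mk F v hv ∈ Bset F q (n + 1) α β
      ↔ splitCoords F n v ∈ hypersurfaceCone (Fin n) α (β ^ q - β) := by
  obtain ⟨a, ha⟩ := Projectivization.exists_smul_eq_mk_rep F v hv
  rw [← smul_mem_hypersurfaceCone_iff a.ne_zero, ← map_smul]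
  change _ ↔ splitCoords F n (a • v) ∈ _
  rw [ha]
  generalize Projectivization.mk F v hv = P
  have hscale : (fun i ↦ P.rep i / P.rep 0) = (P.rep 0)⁻¹ • P.rep := by
    ext i
    simp [div_eq_inv_mul]
  rw [Bset, Set.mem_ofPred_eq, affEq_iff_mem_affineSolutions hstar, hscale,
    sum_ite_one_le_and_lt (fun i ↦ P.rep i ^ 2), map_smul]
  rfl

variable [Finite F]

lemma isCuttingSet_Bset (hn : 2 < n) (hstar : ∀ x : F, star x = x ^ q)
    (hstar_ne : ∃ x : F, star x ≠ x) (h2 : (2 : F) ≠ 0) (hneg : IsSquare (-1 : F))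
    (hαβ : α ≠ 0 ∨ β ^ q ≠ β) : IsCuttingSet (Bset F q (n + 1) α β) := by
  have : Nontrivial (Fin n) := Fin.nontrivial_iff_two_le.2 hn.le
  have hδ : β ^ q - β ∈ skewAdjoint F := hstar β ▸ star_sub_self_mem_skewAdjoint β
  have hαδ : α ≠ 0 ∨ β ^ q - β ≠ 0 := hαβ.imp_right sub_ne_zero.2
  refine isCuttingSet_of_forall_dual fun f g hfg v hv ↦ ?_
  let f' : Dual F (F × (Fin n → F) × F) := f ∘ₗ (splitCoords F n).symm
  let g' : Dual F (F × (Fin n → F) × F) := g ∘ₗ (splitCoords F n).symm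
  have hfg' : ∀ w ∈ hypersurfaceCone (Fin n) α (β ^ q - β), f' w = 0 → g' w = 0 := by
    intro w hw hfw
    rcases eq_or_ne w 0 with rfl | hw0
    · exact map_zero g'
    · exact hfg ((splitCoords F n).symm w) (by simpa using hw0)
        ((mk_mem_Bset_iff hstar _).2 (by simpa using hw)) hfw
  have hker : LinearMap.ker f' ≤ LinearMap.ker g' := by
    by_cases hf : f' (0, 0, 1) = 0
    · exact ker_le_ker_of_hypersurfaceCone_of_apply_eq_zero h2 hneg hδ hfg' hf
    · exact ker_le_ker_of_hypersurfaceCone_of_apply_ne_zero (by simpa using hn) h2 hstar_ne hαδ hδ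
        hfg' hf
  simpa [f', g'] using hker (x := splitCoords F n v) (by simpa [f'] using hv)

lemma card_Bset_mul_add_one (hstar : ∀ x : F, star x = x ^ q) (hstar_ne : ∃ x : F, star x ≠ x)
    (h2 : (2 : F) ≠ 0) (hF : Nat.card F = q ^ 2) :
    Nat.card (Bset F q (n + 1) α β) * (q ^ 2 - 1) + 1
      = (q ^ 2 - 1) * q ^ (2 * n + 1) + q ^ 2 * Nat.card (isotropicVectors F (Fin n)) := by
  have hδ : β ^ q - β ∈ skewAdjoint F := hstar β ▸ star_sub_self_mem_skewAdjoint β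
  have hq : Nat.card (selfAdjoint F) = q :=
    Nat.pow_left_injective two_ne_zero ((card_selfAdjoint_sq h2 hstar_ne).trans hF)
  calc Nat.card (Bset F q (n + 1) α β) * (q ^ 2 - 1) + 1
      = Nat.card (splitCoords F n ⁻¹' hypersurfaceCone (Fin n) α (β ^ q - β)) := by
        have hzero : 0 ∈ splitCoords F n ⁻¹' hypersurfaceCone (Fin n) α (β ^ q - β) := by
          simpa using zero_mem_hypersurfaceCone
        rw [← hF, card_cone_eq hzero fun v hv ↦ mk_mem_Bset_iff hstar hv]
    _ = Nat.card (hypersurfaceCone (Fin n) α (β ^ q - β)) :=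
        Nat.card_congr ((splitCoords F n).toEquiv.subtypeEquiv fun _ ↦ Iff.rfl)
    _ = _ := by
        rw [card_hypersurfaceCone, card_affineSolutions h2 hδ, Fintype.card_fin, hF, hq]
        ring

lemma card_Bset_of_odd (hq : 1 < q) (hn : Odd n) (hstar : ∀ x : F, star x = x ^ q)
    (hstar_ne : ∃ x : F, star x ≠ x) (h2 : (2 : F) ≠ 0) (hneg : IsSquare (-1 : F))
    (hF : Nat.card F = q ^ 2) :
    Nat.card (Bset F q (n + 1) α β)
      = q ^ (2 * n + 1) + (q ^ (2 * n) - q ^ 2) / (q ^ 2 - 1) + 1 := by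
  obtain ⟨k, rfl⟩ := hn
  have hM := card_mul_card_isotropicVectors_odd h2 hneg k
  rw [hF] at hM
  simpa only [pow_mul q 2 (2 * k + 1), add_zero] using eq_add_add_sub_div_sub_one_add_one (e := 0)
    (Nat.one_lt_pow two_ne_zero hq) (2 * k).succ_ne_zero hM
    (card_Bset_mul_add_one (α := α) (β := β) hstar hstar_ne h2 hF)

lemma card_Bset_of_even (hq : 1 < q) (hn0 : n ≠ 0) (hn : Even n)
    (hstar : ∀ x : F, star x = x ^ q) (hstar_ne : ∃ x : F, star x ≠ x) (h2 : (2 : F) ≠ 0)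
    (hneg : IsSquare (-1 : F)) (hF : Nat.card F = q ^ 2) :
    Nat.card (Bset F q (n + 1) α β)
      = q ^ (2 * n + 1) + q ^ n + (q ^ (2 * n) - q ^ 2) / (q ^ 2 - 1) + 1 := by
  obtain ⟨k, rfl⟩ := even_iff_exists_two_mul.1 hn
  have hM := card_mul_card_isotropicVectors_even h2 hneg k
  rw [hF, pow_succ' _ k] at hM
  rw [pow_mul q 2 (2 * k), pow_mul q 2 k]
  exact eq_add_add_sub_div_sub_one_add_one (Nat.one_lt_pow two_ne_zero hq) hn0 hM
    (card_Bset_mul_add_one (α := α) (β := β) hstar hstar_ne h2 hF)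

end Hypersurface

section Frobenius

variable {F : Type*} [Field F] [Finite F] {q : ℕ}

/-- The conjugation `x ↦ x ^ q` of the field with `q²` elements over its subfield of order `q`. -/
abbrev frobeniusStarRing (hq : IsPrimePow q) (hF : Nat.card F = q ^ 2) : StarRing F where
  star x := x ^ q
  star_involutive x := by
    have := Fintype.ofFinite F
    change (x ^ q) ^ q = x
    rw [← pow_mul, ← pow_two, ← hF, Nat.card_eq_fintype_card, FiniteField.pow_card]
  star_mul x y := by rw [mul_pow, mul_comm]
  star_add x y := by
    obtain ⟨p, k, hp, -, rfl⟩ := hq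
    have := Fintype.ofFinite F
    have : Fact p.Prime := ⟨hp.nat_prime⟩
    have : CharP F p := charP_of_card_eq_prime_pow (f := k * 2) (by
      rw [← Nat.card_eq_fintype_card, hF, pow_mul])
    exact add_pow_char_pow x y p k

lemma exists_pow_ne_self (hq : 1 < q) (hF : q < Nat.card F) : ∃ x : F, x ^ q ≠ x := by
  by_contra! hpow
  have := Fintype.ofFinite F
  have hdvd : Fintype.card F - 1 ∣ q - 1 := by
    rw [← FiniteField.forall_pow_eq_one_iff F]
    intro x
    rw [← mul_left_inj x, ← pow_succ, Nat.sub_add_cancel hq.le, one_mul, Units.ext_iff,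
      Units.val_pow_eq_pow_val, hpow]
  have hle := Nat.le_of_dvd (by omega) hdvd
  rw [Nat.card_eq_fintype_card] at hF
  omega

lemma two_ne_zero_of_odd_card (hF : Odd (Nat.card F)) : (2 : F) ≠ 0 := by
  have := Fintype.ofFinite F
  refine Ring.two_ne_zero fun hchar ↦ ?_
  have heven := FiniteField.even_card_of_char_two hchar
  rw [← Nat.card_eq_fintype_card] at heven
  exact Nat.not_even_iff_odd.2 hF (Nat.even_iff.2 heven)

lemma isSquare_neg_one_of_card_eq_sq (hF : Nat.card F = q ^ 2) : IsSquare (-1 : F) := by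
  have := Fintype.ofFinite F
  rw [FiniteField.isSquare_neg_one_iff, ← Nat.card_eq_fintype_card, hF, Nat.pow_mod]
  have hlt : q % 4 < 4 := Nat.mod_lt q (by norm_num)
  interval_cases q % 4 <;> decide

end Frobenius

theorem statement7_general {F : Type*} [Field F] [Finite F] {q r : ℕ} (hq : IsPrimePow q)
    (hqodd : Odd q) (hr : 3 < r) (hF : Nat.card F = q ^ 2) {α β : F} (hαβ : α ≠ 0 ∨ β ^ q ≠ β) :
    Submodule.span F (Projectivization.rep '' Bset F q r α β) = ⊤ ∧
    IsMinimalCode (Bset F q r α β) ∧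
    (Odd r → Nat.card ↥(Bset F q r α β) =
      q ^ (2 * r - 1) + q ^ (r - 1) + (q ^ (2 * (r - 1)) - q ^ 2) / (q ^ 2 - 1) + 1) ∧
    (Even r → Nat.card ↥(Bset F q r α β) =
      q ^ (2 * r - 1) + (q ^ (2 * (r - 1)) - q ^ 2) / (q ^ 2 - 1) + 1) := by
  obtain ⟨n, rfl⟩ : ∃ n, r = n + 1 := ⟨r - 1, by omega⟩
  let _ := frobeniusStarRing hq hF
  have hstar (x : F) : star x = x ^ q := rfl
  have hstar_ne : ∃ x : F, star x ≠ x :=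
    exists_pow_ne_self hq.one_lt (hF ▸ lt_self_pow₀ hq.one_lt one_lt_two)
  have h2 : (2 : F) ≠ 0 := two_ne_zero_of_odd_card (hF ▸ hqodd.pow)
  have hneg : IsSquare (-1 : F) := isSquare_neg_one_of_card_eq_sq hF
  have hcutting : IsCuttingSet (Bset F q (n + 1) α β) :=
    isCuttingSet_Bset (by omega) hstar hstar_ne h2 hneg hαβ
  refine ⟨hcutting.span_eq_top, hcutting.isMinimalCode, fun hodd ↦ ?_, fun heven ↦ ?_⟩
  · exact card_Bset_of_even hq.one_lt (by omega) (by simpa [parity_simps] using hodd) hstar hstar_ne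
      h2 hneg hF
  · exact card_Bset_of_odd hq.one_lt (by simpa [parity_simps] using heven) hstar hstar_ne h2 hneg hF

/-- for `q` odd and `r > 3`, the hypersurface `B` spans `PG(r,q²)`
(so `C(B)` has dimension `r+1`), the projective code `C(B)` is a minimal code,
and its length `|B|` is as stated. -/
theorem statement7 (q r : ℕ) (hq : IsPrimePow q) (hqodd : Odd q) (hr : 3 < r)
    (F : Type) [Field F] [Fintype F] (hF : Fintype.card F = q ^ 2)
    (α β : F) (hα : α ≠ 0) (hβ : β ^ q ≠ β)
    (hcond : (Odd r ∧ 4 * α ^ (q + 1) + (β ^ q - β) ^ 2 ≠ 0) ∨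
      (Even r ∧ ∀ t : F, t ^ q = t → t ^ 2 ≠ 4 * α ^ (q + 1) + (β ^ q - β) ^ 2)) :
    Submodule.span F (Projectivization.rep '' Bset F q r α β) = ⊤ ∧
    IsMinimalCode (Bset F q r α β) ∧
    (Odd r → Nat.card ↥(Bset F q r α β) =
      q ^ (2 * r - 1) + q ^ (r - 1) + (q ^ (2 * (r - 1)) - q ^ 2) / (q ^ 2 - 1) + 1) ∧
    (Even r → Nat.card ↥(Bset F q r α β) =
      q ^ (2 * r - 1) + (q ^ (2 * (r - 1)) - q ^ 2) / (q ^ 2 - 1) + 1) :=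
  statement7_general hq hqodd hr (Nat.card_eq_fintype_card.trans hF) (.inl hα)
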